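/- Suppose β ∈ ℝ is such that for every choice of points ξ_2, …, ξ_K ∈ ℝ^K, the strictly lower triangular matrix H(ξ) ∈ ℝ^{K×K} with (k,j) entry ∂²g/∂x_k∂x_j (ξ_k) for j < k and 0 for j ≥ k has spectral norm ‖H(ξ)‖ ≤ β. Then the cyclic coordinate gradient descent iterates satisfy, for all r ≥ 1, g(x^{(r)}) − g(x*) ≤ 2 (P_max + β²/P_min) R_0² / r. -/

import Mathlib

open Finset

/-- Squared Euclidean norm of a vector in `ℝ^n`. -/
noncomputable def sqnorm {n : ℕ} (v : Fin n → ℝ) : ℝ := ∑ i, v i ^ 2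

/-- The partial derivative `∂_k g (x)`. -/
noncomputable def pder {K : ℕ} (g : (Fin K → ℝ) → ℝ) (k : Fin K) (x : Fin K → ℝ) : ℝ :=
  fderiv ℝ g x (Pi.single k 1)

/-- The second partial derivative `∂²g/∂x_i∂x_j (x) = ∂_i (∂_j g) (x)`. -/
noncomputable def pder2 {K : ℕ} (g : (Fin K → ℝ) → ℝ) (i j : Fin K) (x : Fin K → ℝ) : ℝ :=
  fderiv ℝ (fun y => fderiv ℝ g y (Pi.single j 1)) x (Pi.single i 1)

/-- One cycle of cyclic coordinate gradient descent (CGD) from `x` with stepsizes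
`1/P_k`: `w_1 = x`, `w_{k+1} = w_k − (1/P_k) ∂_k g(w_k) e_k`, and `x' = w_{K+1}`. -/
def CGDCycle {K : ℕ} (g : (Fin K → ℝ) → ℝ) (P : Fin K → ℝ)
    (x : Fin K → ℝ) (w : Fin (K + 1) → Fin K → ℝ) (x' : Fin K → ℝ) : Prop :=
  w 0 = x ∧
  (∀ k : Fin K, w k.succ =
    w k.castSucc - ((P k)⁻¹ * pder g k (w k.castSucc)) • (Pi.single k 1 : Fin K → ℝ)) ∧
  x' = w (Fin.last K)

/-- Maximum of a finite family of reals indexed by `Fin K`, `K ≥ 1`. -/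
noncomputable def maxOf {K : ℕ} (hK : 1 ≤ K) (P : Fin K → ℝ) : ℝ :=
  Finset.univ.sup' (Finset.univ_nonempty_iff.mpr ⟨⟨0, hK⟩⟩) P

/-- Minimum of a finite family of reals indexed by `Fin K`, `K ≥ 1`. -/
noncomputable def minOf {K : ℕ} (hK : 1 ≤ K) (P : Fin K → ℝ) : ℝ :=
  Finset.univ.inf' (Finset.univ_nonempty_iff.mpr ⟨⟨0, hK⟩⟩) P

/-- Spectral (ℓ2 operator) norm of a real `K × K` matrix, characterized as the
maximum of `‖Hv‖` over unit vectors `v`. -/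
noncomputable def specNorm {K : ℕ} (H : Matrix (Fin K) (Fin K) ℝ) : ℝ :=
  sSup {r : ℝ | ∃ v : Fin K → ℝ, sqnorm v = 1 ∧ r = Real.sqrt (sqnorm (H.mulVec v))}

/-- The "moving-iterate Hessian" `H(ξ)`: the strictly lower triangular matrix
whose `(k,j)` entry, for `j < k`, is `∂²g/∂x_k∂x_j (ξ_k)`, and `0` otherwise. -/
noncomputable def Hmat {K : ℕ} (g : (Fin K → ℝ) → ℝ) (ξ : Fin K → Fin K → ℝ) :
    Matrix (Fin K) (Fin K) ℝ :=
  Matrix.of fun k j => if j < k then pder2 g k j (ξ k) else 0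


lemma pder2_symm {K : ℕ} (g : (Fin K → ℝ) → ℝ) (hg : ContDiff ℝ 2 g) (i j : Fin K) (x : Fin K → ℝ) :
    pder2 g i j x = pder2 g j i x := by
  have hd : DifferentiableAt ℝ (fderiv ℝ g) x :=
    (hg.fderiv_right (m := 1) (by norm_num)).differentiable (by norm_num) x
  have h := (hg.contDiffAt (x := x)).isSymmSndFDerivAt (by simp)
  unfold pder2
  rw [fderiv_clm_apply hd (by fun_prop), fderiv_clm_apply hd (by fun_prop)]
  simpa using h.eq _ _

lemma clm_sum {K : ℕ} (f : (Fin K → ℝ) →L[ℝ] ℝ) (v : Fin K → ℝ) :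
    f v = ∑ j, v j * f (Pi.single j 1) := by
  conv_lhs => rw [← Finset.univ_sum_single v]
  rw [map_sum]
  refine Finset.sum_congr rfl fun j _ => ?_
  have : (Pi.single j (v j) : Fin K → ℝ) = v j • Pi.single j 1 := by
    rw [← Pi.single_smul]; simp
  rw [this, map_smul, smul_eq_mul]

/-- intermediate points of a coordinate path -/
def Zp {K : ℕ} (y u : Fin K → ℝ) (k : ℕ) : Fin K → ℝ :=
  fun i => if (i : ℕ) < k then y i + u i else y i

lemma Zp_succ {K : ℕ} (y u : Fin K → ℝ) (k : Fin K) :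
    Zp y u ((k : ℕ) + 1) = Zp y u k + u k • (Pi.single k 1 : Fin K → ℝ) := by
  ext i
  by_cases h : i = k
  · subst h; simp [Zp]
  · have : (i : ℕ) ≠ k := fun h' => h (Fin.ext h')
    have h2 : (i : ℕ) < k + 1 ↔ (i : ℕ) < k := by omega
    simp [Zp, h, h2]

lemma pder_mvt {K : ℕ} (g : (Fin K → ℝ) → ℝ) (hg : ContDiff ℝ 2 g) (y u : Fin K → ℝ) :
    ∃ ξ : Fin K → Fin K → ℝ, ∀ k : Fin K,
      pder g k (Zp y u k) - pder g k y = (Hmat g ξ).mulVec u k := by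
  have : ∀ k : Fin K, ∃ z, pder g k (Zp y u k) - pder g k y
      = ∑ j, (if j < k then pder2 g k j z else 0) * u j := by
    intro k
    have hd : Differentiable ℝ (fderiv ℝ g) :=
      (hg.fderiv_right (m := 1) (by norm_num)).differentiable (by norm_num)
    have hd2 : Differentiable ℝ (pder g k) := by unfold pder; fun_prop
    obtain ⟨z, -, hz⟩ := domain_mvt (f := pder g k) (s := Set.univ) (x := y) (y := Zp y u k)
      (f' := fun z => fderiv ℝ (pder g k) z)
      (fun x _ => (hd2 x).hasFDerivAt.hasFDerivWithinAt) convex_univ trivial trivial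
    refine ⟨z, ?_⟩
    rw [hz, clm_sum]
    refine Finset.sum_congr rfl fun j _ => ?_
    have e : fderiv ℝ (pder g k) z (Pi.single j 1) = pder2 g k j z := by
      rw [pder2_symm g hg]; rfl
    rw [e]
    by_cases h : j < k
    · have : (j:ℕ) < k := h
      simp [Zp, h, mul_comm]
    · have : ¬ (j:ℕ) < k := h
      simp [Zp, h]
  choose ξ hξ using this
  exact ⟨ξ, fun k => by rw [hξ k]; rfl⟩

lemma sqnorm_nonneg {n : ℕ} (v : Fin n → ℝ) : 0 ≤ sqnorm v :=
  Finset.sum_nonneg fun _ _ => sq_nonneg _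

lemma sqnorm_smul {n : ℕ} (c : ℝ) (v : Fin n → ℝ) : sqnorm (c • v) = c ^ 2 * sqnorm v := by
  simp [sqnorm, mul_pow, Finset.mul_sum]

lemma spec_bound {K : ℕ} (H : Matrix (Fin K) (Fin K) ℝ) (β : ℝ) (h : specNorm H ≤ β)
    (v : Fin K → ℝ) : sqnorm (H.mulVec v) ≤ β ^ 2 * sqnorm v := by
  have hb : ∀ v : Fin K → ℝ, sqnorm (H.mulVec v) ≤ (∑ i, ∑ j, H i j ^ 2) * sqnorm v := by
    intro v
    unfold sqnorm
    rw [Finset.sum_mul]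
    refine Finset.sum_le_sum fun i _ => ?_
    exact Finset.sum_mul_sq_le_sq_mul_sq Finset.univ (fun j => H i j) v
  rcases (sqnorm_nonneg v).eq_or_lt with h0 | h0
  · have := hb v
    rw [← h0] at this ⊢
    simpa using this
  · set s := Real.sqrt (sqnorm v) with hs
    have hsp : 0 < s := Real.sqrt_pos.mpr h0
    have hs2 : s ^ 2 = sqnorm v := Real.sq_sqrt h0.le
    have hle : Real.sqrt (sqnorm (H.mulVec (s⁻¹ • v))) ≤ β := by
      refine le_trans (le_csSup (s := {r : ℝ | ∃ v : Fin K → ℝ, sqnorm v = 1 ∧ r = Real.sqrt (sqnorm (H.mulVec v))}) ?_ ⟨s⁻¹ • v, ?_, rfl⟩) h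
      · refine ⟨Real.sqrt (∑ i, ∑ j, H i j ^ 2), ?_⟩
        rintro r ⟨w, hw, rfl⟩
        apply Real.sqrt_le_sqrt
        simpa [hw] using hb w
      · rw [sqnorm_smul, ← hs2]; field_simp
    have := (Real.sqrt_le_left (le_trans (Real.sqrt_nonneg _) hle)).mp hle
    rw [Matrix.mulVec_smul, sqnorm_smul, inv_pow, hs2] at this
    rwa [inv_mul_le_iff₀ h0, mul_comm] at this

lemma spec_nonneg {K : ℕ} (H : Matrix (Fin K) (Fin K) ℝ) : 0 ≤ specNorm H := by
  apply Real.sSup_nonneg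
  rintro r ⟨w, hw, rfl⟩
  exact Real.sqrt_nonneg _

lemma hasDeriv_line {K : ℕ} (g : (Fin K → ℝ) → ℝ) (hg : ContDiff ℝ 2 g) (x v : Fin K → ℝ) (t : ℝ) :
    HasDerivAt (fun t : ℝ => g (x + t • v)) (fderiv ℝ g (x + t • v) v) t := by
  have h1 : HasDerivAt (fun t : ℝ => x + t • v) v t := by
    simpa using ((hasDerivAt_id t).smul_const v).const_add x
  have h2 := (hg.differentiable (by norm_num) (x + t • v)).hasFDerivAt
  exact h2.comp_hasDerivAt t h1

lemma coord_descent {K : ℕ} (g : (Fin K → ℝ) → ℝ) (hg : ContDiff ℝ 2 g) (k : Fin K) (L : ℝ)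
    (hLip : ∀ (x : Fin K → ℝ) (t : ℝ),
      |pder g k (x + t • (Pi.single k 1 : Fin K → ℝ)) - pder g k x| ≤ L * |t|)
    (x : Fin K → ℝ) (t : ℝ) :
    g (x + t • (Pi.single k 1 : Fin K → ℝ)) ≤ g x + t * pder g k x + L / 2 * t ^ 2 := by
  set e : Fin K → ℝ := Pi.single k 1
  let ψ : ℝ → ℝ := fun t => t * pder g k x + L / 2 * t ^ 2 - g (x + t • e)
  have hψ : ∀ t, HasDerivAt ψ (pder g k x + L * t - pder g k (x + t • e)) t := by
    intro t
    have h1 : HasDerivAt (fun t : ℝ => t * pder g k x + L / 2 * t ^ 2) (pder g k x + L * t) t := by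
      have := ((hasDerivAt_id t).mul_const (pder g k x)).add (((hasDerivAt_id t).pow 2).const_mul (L / 2))
      refine this.congr_deriv ?_
      simp; ring
    exact h1.sub (hasDeriv_line g hg x e t)
  have hc : Continuous ψ := continuous_iff_continuousAt.mpr fun t => (hψ t).continuousAt
  have h0 : ψ 0 ≤ ψ t := by
    rcases le_total 0 t with ht | ht
    · refine monotoneOn_of_deriv_nonneg (convex_Ici 0) hc.continuousOn
        (fun s _ => (hψ s).differentiableAt.differentiableWithinAt) ?_ (by simp) ht ht
      intro s hs
      rw [(hψ s).deriv]
      have hs : 0 < s := by simpa using hs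
      have := (abs_le.mp (hLip x s)).2
      rw [abs_of_pos hs] at this
      linarith
    · refine antitoneOn_of_deriv_nonpos (convex_Iic 0) hc.continuousOn
        (fun s _ => (hψ s).differentiableAt.differentiableWithinAt) ?_ ht (by simp) ht
      intro s hs
      rw [(hψ s).deriv]
      have hs : s < 0 := by simpa using hs
      have := (abs_le.mp (hLip x s)).1
      rw [abs_of_neg hs] at this
      linarith
  simp only [ψ, zero_smul, add_zero] at h0
  linarith

lemma path_descent {K : ℕ} (g : (Fin K → ℝ) → ℝ) (hg : ContDiff ℝ 2 g) (L : Fin K → ℝ)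
    (hLip : ∀ (k : Fin K) (x : Fin K → ℝ) (t : ℝ),
      |pder g k (x + t • (Pi.single k 1 : Fin K → ℝ)) - pder g k x| ≤ L k * |t|)
    (y u : Fin K → ℝ) :
    g (y + u) ≤ g y + ∑ k, (u k * pder g k (Zp y u k) + L k / 2 * u k ^ 2) := by
  have h1 : ∑ k : Fin K, (g (Zp y u ((k:ℕ) + 1)) - g (Zp y u k)) = g (Zp y u K) - g (Zp y u 0) := by
    rw [Fin.sum_univ_eq_sum_range (fun k => g (Zp y u (k + 1)) - g (Zp y u k)),
      Finset.sum_range_sub (fun k => g (Zp y u k))]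
  have h2 : Zp y u K = y + u := by ext i; simp [Zp]
  have h3 : Zp y u 0 = y := by ext i; simp [Zp]
  rw [h2, h3] at h1
  have h4 : ∑ k : Fin K, (g (Zp y u ((k:ℕ) + 1)) - g (Zp y u k)) ≤
      ∑ k, (u k * pder g k (Zp y u k) + L k / 2 * u k ^ 2) := by
    refine Finset.sum_le_sum fun k _ => ?_
    rw [Zp_succ]
    linarith [coord_descent g hg k (L k) (hLip k) (Zp y u k) (u k)]
  linarith

lemma foc {K : ℕ} (g : (Fin K → ℝ) → ℝ) (hg : ContDiff ℝ 2 g) (hgcv : ConvexOn ℝ Set.univ g)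
    (x y : Fin K → ℝ) : g x - g y ≤ ∑ k, (x k - y k) * pder g k x := by
  have hc : ConvexOn ℝ Set.univ (fun t : ℝ => g (x + t • (y - x))) := by
    refine ⟨convex_univ, fun s _ t _ a b ha hb hab => ?_⟩
    have := hgcv.2 (Set.mem_univ (x + s • (y - x))) (Set.mem_univ (x + t • (y - x))) ha hb hab
    convert this using 2
    ext i
    simp
    linear_combination (-(x i)) * hab
  have h := hc.le_slope_of_hasDerivAt (Set.mem_univ 0) (Set.mem_univ 1) one_pos
    (hasDeriv_line g hg x (y - x) 0)
  simp only [slope_def_field, zero_smul, add_zero, one_smul, add_sub_cancel, sub_zero, div_one] at h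
  rw [clm_sum] at h
  have e : ∑ k, (x k - y k) * pder g k x = - ∑ j, (y - x) j * (fderiv ℝ g x) (Pi.single j 1) := by
    rw [← Finset.sum_neg_distrib]
    refine Finset.sum_congr rfl fun j _ => ?_
    simp [pder]; ring
  linarith

lemma cgd_le_of_sq {a b : ℝ} (h : a ^ 2 ≤ b ^ 2) (hb : 0 ≤ b) : a ≤ b :=
  le_trans (le_abs_self a) (abs_le_of_sq_le_sq h hb)


lemma num_h (M : ℝ) (hM : 0 < M) (n : ℕ) :
    ∑ j ∈ Finset.range n, 1 / ((j:ℝ) + M) ≤ 1 / M - 1 / (n + M) + Real.log ((n + M) / M) := by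
  induction n with
  | zero => simp [hM.ne']
  | succ n ih =>
    rw [Finset.sum_range_succ]
    have hx : 0 < (n:ℝ) + M := by positivity
    have h1 := Real.log_le_sub_one_of_pos (x := (n + M) / (n + 1 + M)) (by positivity)
    rw [Real.log_div (by positivity) (by positivity)] at h1 ih
    have e : ((n:ℝ) + M) / (n + 1 + M) - 1 = - (1 / (n + 1 + M)) := by field_simp; ring
    push_cast
    rw [Real.log_div (by positivity) (by positivity)]
    rw [e] at h1
    linarith

lemma num_h2 (l : ℝ) (hl : 0 ≤ l) (n : ℕ) :
    2 * l ^ 2 * ∑ j ∈ Finset.range n, 1 / ((j:ℝ) + (1 + l)) ≤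
      n + 3 * l ^ 3 + 5 / 2 * l ^ 2 - l / 2 + 4 := by
  rcases hl.eq_or_lt with rfl | hl
  · simp; positivity
  have h := num_h (1 + l) (by positivity) n
  have hy : 0 < ((n:ℝ) + (1 + l)) / (1 + l) := by positivity
  set y := ((n:ℝ) + (1 + l)) / (1 + l) with hyd
  have h1 := Real.log_le_sub_one_of_pos (x := y / (2 * l)) (by positivity)
  have h2 := Real.log_le_sub_one_of_pos hl
  have h3 : Real.log 2 < 1 := by linarith [Real.log_two_lt_d9]
  rw [Real.log_div hy.ne' (by positivity), Real.log_mul (by norm_num) hl.ne'] at h1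
  have h4 : 0 ≤ 1 / ((n:ℝ) + (1 + l)) := by positivity
  have hy2 : y * (1 + l) = n + (1 + l) := by rw [hyd]; field_simp
  have h5 : ∑ j ∈ Finset.range n, 1 / ((j:ℝ) + (1 + l)) ≤ 1 / (1 + l) + (y / (2 * l) - 1 + l) := by
    linarith
  have h6 : 2 * l ^ 2 * (1 / (1 + l)) ≤ 2 * l := by
    rw [mul_one_div, div_le_iff₀ (by positivity)]; nlinarith
  have h7 : 2 * l ^ 2 * (y / (2 * l)) = l * y := by field_simp
  have h8 := mul_le_mul_of_nonneg_left h5 (by positivity : 0 ≤ 2 * l ^ 2)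
  have hy1 : 0 ≤ (n:ℝ) := by positivity
  have : y ≥ 1 := by rw [hyd, ge_iff_le, le_div_iff₀ (by positivity)]; linarith
  have : 0 < l ^ 3 := by positivity
  nlinarith [sq_nonneg (l - 1/2)]

lemma num_main (C l : ℝ) (hC : 0 ≤ C) (hl : 0 ≤ l) (D V : ℕ → ℝ)
    (hV0 : ∀ r, 0 ≤ V r) (hV : ∀ r, V r ≤ C) (hD0 : D 0 ≤ (1 / 2 + l) * C)
    (hstep : ∀ r t c, 0 < t → 0 < c →
      (t + c) * D (r + 1) + t / 2 * V (r + 1) ≤ c * D r + t / 2 * V r + t ^ 2 * l ^ 2 * C / (2 * c))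
    (n : ℕ) (hn : 1 ≤ n) : D n ≤ 2 * (1 + l ^ 2) * C / n := by
  set M := 1 + l with hM
  have hMp : 0 < M := by positivity
  have key : ∀ n : ℕ, ((n + M + 1) * (n + M) / 2) * D n + (n + M) / 2 * V n ≤
      ((M + 1) * M / 2) * ((1 / 2 + l) * C) + (n + M) / 2 * C
       + l ^ 2 * C * (n + ∑ j ∈ Finset.range n, 1 / ((j:ℝ) + M)) := by
    intro n
    induction n with
    | zero =>
      simp only [CharP.cast_eq_zero, zero_add, Finset.range_zero, Finset.sum_empty, mul_zero, add_zero]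
      have := hV 0
      gcongr
    | succ n ih =>
      have hs := hstep n (n + M + 1) ((n + M + 1) * (n + M) / 2) (by positivity) (by positivity)
      have e : ((n:ℝ) + M + 1) ^ 2 * l ^ 2 * C / (2 * ((n + M + 1) * (n + M) / 2))
        = l ^ 2 * C * (1 + 1 / (n + M)) := by field_simp
      rw [e] at hs
      rw [Finset.sum_range_succ]
      push_cast
      have := hV n
      nlinarith
  have k := key n
  have hh := num_h2 l hl n
  set h := ∑ j ∈ Finset.range n, 1 / ((j:ℝ) + (1 + l)) with hhd
  have hn' : (1:ℝ) ≤ n := by exact_mod_cast hn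
  have hVn := hV0 n
  have hc : 0 < ((n:ℝ) + M + 1) * (n + M) / 2 := by positivity
  have k2 : ((n + M + 1) * (n + M) / 2) * D n ≤ (((M + 1) * M / 2) * (1 / 2 + l) + (n + M) / 2
       + l ^ 2 * (n + h)) * C := by
    have : 0 ≤ (n + M) / 2 * V n := by positivity
    linarith
  have k3 : n * (((M + 1) * M / 2) * (1 / 2 + l) + (n + M) / 2 + l ^ 2 * (n + h))
      ≤ 2 * (1 + l ^ 2) * ((n + M + 1) * (n + M) / 2) := by
    have h9 := mul_le_mul_of_nonneg_left hh (by positivity : 0 ≤ (n:ℝ))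
    have : 0 ≤ (1 + l^2) * ((M + 1) * M) := by positivity
    rw [hM] at this ⊢
    nlinarith
  rw [le_div_iff₀ (by positivity)]
  have k4 := mul_le_mul_of_nonneg_right k3 hC
  have k5 := mul_le_mul_of_nonneg_left k2 (by positivity : 0 ≤ (n:ℝ))
  refine le_of_mul_le_mul_left ?_ hc
  nlinarith
/-- Theorem 3, meta iteration complexity of cyclic CGD: if
`‖H(ξ)‖ ≤ β` for every choice of `ξ`, then
`g(x^{(r)}) − g(x*) ≤ 2 (P_max + β²/P_min) R_0² / r` for all `r ≥ 1`. -/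
theorem cgd_rate_meta {K : ℕ} (hK : 1 ≤ K)
    (g : (Fin K → ℝ) → ℝ) (hg : ContDiff ℝ 2 g) (hgcv : ConvexOn ℝ Set.univ g)
    (L : Fin K → ℝ)
    (hLip : ∀ (k : Fin K) (x : Fin K → ℝ) (t : ℝ),
      |pder g k (x + t • (Pi.single k 1 : Fin K → ℝ)) - pder g k x| ≤ L k * |t|)
    (P : Fin K → ℝ) (hP : ∀ k, L k ≤ P k)
    (xstar : Fin K → ℝ) (hxstar : ∀ y : Fin K → ℝ, g xstar ≤ g y)
    (β : ℝ) (hβ : ∀ ξ : Fin K → Fin K → ℝ, specNorm (Hmat g ξ) ≤ β)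
    (x : ℕ → Fin K → ℝ) (w : ℕ → Fin (K + 1) → Fin K → ℝ)
    (hcycle : ∀ r : ℕ, CGDCycle g P (x r) (w r) (x (r + 1)))
    (R0 : ℝ)
    (hR0 : ∀ z : Fin K → ℝ, g z ≤ g (x 0) →
      ∀ y : Fin K → ℝ, (∀ y' : Fin K → ℝ, g y ≤ g y') →
        Real.sqrt (sqnorm (z - y)) ≤ R0)
    (r : ℕ) (hr : 1 ≤ r) :
    g (x r) - g xstar ≤
      2 * (maxOf hK P + β ^ 2 / minOf hK P) * R0 ^ 2 / r := by
  have hL0 : ∀ k, 0 ≤ L k := fun k => by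
    have := hLip k (x 0) 1
    simp only [abs_one, mul_one] at this
    exact le_trans (abs_nonneg _) this
  have hgrad : ∀ k, pder g k xstar = 0 := fun k => by
    have : IsLocalMin g xstar := Filter.Eventually.of_forall hxstar
    simp [pder, this.fderiv_eq_zero]
  have hPpos : ∀ k, 0 < P k := by
    intro k
    by_contra hneg
    have hLk : L k = 0 := le_antisymm (by linarith [hP k]) (hL0 k)
    have hmin : ∀ t : ℝ, ∀ y', g (xstar + t • (Pi.single k 1 : Fin K → ℝ)) ≤ g y' := by
      intro t y'
      have := coord_descent g hg k (L k) (hLip k) xstar t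
      rw [hgrad k, hLk] at this
      linarith [hxstar y']
    have hb := hR0 (x 0) le_rfl _ (hmin (x 0 k - xstar k - (|R0| + 1)))
    have h1 : (|R0| + 1) ^ 2 ≤ sqnorm (x 0 - (xstar + (x 0 k - xstar k - (|R0| + 1)) •
        (Pi.single k 1 : Fin K → ℝ))) := by
      refine le_trans (le_of_eq ?_) (Finset.single_le_sum (fun i _ => sq_nonneg _) (Finset.mem_univ k))
      simp
      ring
    have h2 := Real.le_sqrt_of_sq_le h1
    linarith [le_abs_self R0]
  have hPmax : ∀ k, P k ≤ maxOf hK P := fun k => Finset.le_sup' P (Finset.mem_univ k)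
  have hPmin : ∀ k, minOf hK P ≤ P k := fun k => Finset.inf'_le P (Finset.mem_univ k)
  have hmin0 : 0 < minOf hK P := by
    unfold minOf
    rw [Finset.lt_inf'_iff]
    exact fun k _ => hPpos k
  have hmm : minOf hK P ≤ maxOf hK P := le_trans (hPmin ⟨0, hK⟩) (hPmax ⟨0, hK⟩)
  set Pm := minOf hK P
  set PM := maxOf hK P
  have hPM0 : 0 < PM := lt_of_lt_of_le hmin0 hmm
  have hβ0 : 0 ≤ β := le_trans (spec_nonneg _) (hβ (fun _ => 0))
  set l := β / Real.sqrt (Pm * PM) with hl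
  have hl0 : 0 ≤ l := by positivity
  have hl2 : l ^ 2 = β ^ 2 / (Pm * PM) := by
    rw [hl, div_pow, Real.sq_sqrt (by positivity)]
  have hlβ : β ≤ l * PM := by
    rw [hl, div_mul_eq_mul_div, le_div_iff₀ (by positivity)]
    gcongr
    rw [Real.sqrt_le_left hPM0.le]
    nlinarith
  -- cycle facts
  have hcyc : ∀ r, ∃ u : Fin K → ℝ, x (r + 1) = x r + u ∧
      ∀ k : Fin K, pder g k (Zp (x r) u k) = - (P k * u k) := by
    intro r
    obtain ⟨h0, hs, hl⟩ := hcycle r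
    let u : Fin K → ℝ := fun k => - ((P k)⁻¹ * pder g k (w r k.castSucc))
    have hw : ∀ k : Fin (K + 1), w r k = Zp (x r) u k := by
      intro k
      induction k using Fin.induction with
      | zero => rw [h0]; ext i; simp [Zp]
      | succ k ih =>
        rw [hs k, Fin.val_succ, Zp_succ, ih]
        simp only [u, neg_smul, Fin.val_castSucc, ih, sub_eq_add_neg]
    refine ⟨u, ?_, fun k => ?_⟩
    · rw [hl, hw]; ext i; simp [Zp]
    · have := hw k.castSucc
      rw [Fin.val_castSucc] at this
      rw [← this]
      have := (hPpos k).ne'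
      simp only [u]; field_simp
  choose u hu hud using hcyc
  have hdesc : ∀ r, ∑ k, P k * u r k ^ 2 ≤ 2 * (g (x r) - g (x (r + 1))) := by
    intro r
    have h := path_descent g hg L hLip (x r) (u r)
    rw [← hu r] at h
    have h2 : ∑ k, (u r k * pder g k (Zp (x r) (u r) k) + L k / 2 * u r k ^ 2) ≤
        ∑ k, (-(1 / 2)) * (P k * u r k ^ 2) := by
      refine Finset.sum_le_sum fun k _ => ?_
      rw [hud r k]
      nlinarith [mul_le_mul_of_nonneg_right (hP k) (sq_nonneg (u r k))]
    rw [← Finset.mul_sum] at h2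
    linarith
  have hmono : ∀ r, g (x r) ≤ g (x 0) := by
    intro r
    induction r with
    | zero => exact le_rfl
    | succ r ih =>
      have h1 : 0 ≤ ∑ k, P k * u r k ^ 2 :=
        Finset.sum_nonneg fun k _ => mul_nonneg (hPpos k).le (sq_nonneg _)
      linarith [hdesc r]
  have hdist : ∀ r, sqnorm (x r - xstar) ≤ R0 ^ 2 := by
    intro r
    have h := hR0 (x r) (hmono r) xstar hxstar
    exact (Real.sqrt_le_left (le_trans (Real.sqrt_nonneg _) h)).mp h
  have hcs : ∀ (a b : Fin K → ℝ), (∑ k, a k * b k) ^ 2 ≤ sqnorm a * sqnorm b := fun a b =>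
    Finset.sum_mul_sq_le_sq_mul_sq Finset.univ a b
  have hquad : ∀ v : Fin K → ℝ, ∑ k, P k * v k ^ 2 ≤ PM * sqnorm v := by
    intro v
    unfold sqnorm
    rw [Finset.mul_sum]
    exact Finset.sum_le_sum fun k _ => mul_le_mul_of_nonneg_right (hPmax k) (sq_nonneg _)
  have hquad2 : ∀ v : Fin K → ℝ, Pm * sqnorm v ≤ ∑ k, P k * v k ^ 2 := by
    intro v
    unfold sqnorm
    rw [Finset.mul_sum]
    exact Finset.sum_le_sum fun k _ => mul_le_mul_of_nonneg_right (hPmin k) (sq_nonneg _)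
  have hfin := num_main (PM * R0 ^ 2) l (by positivity) hl0 (fun r => g (x r) - g xstar)
    (fun r => ∑ k, P k * (x r - xstar) k ^ 2)
    (fun r => Finset.sum_nonneg fun k _ => mul_nonneg (hPpos k).le (sq_nonneg _))
    (fun r => le_trans (hquad _) (mul_le_mul_of_nonneg_left (hdist r) hPM0.le))
    ?_ ?_ r hr
  · refine hfin.trans (le_of_eq ?_)
    rw [hl2]
    field_simp
  · obtain ⟨ξ, hξ⟩ := pder_mvt g hg xstar (x 0 - xstar)
    have h := path_descent g hg L hLip xstar (x 0 - xstar)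
    rw [add_sub_cancel] at h
    set v := x 0 - xstar
    have hv := hdist 0
    have h2 : ∑ k, (v k * pder g k (Zp xstar v k) + L k / 2 * v k ^ 2) ≤
        ∑ k, v k * (Hmat g ξ).mulVec v k + 1 / 2 * ∑ k, P k * v k ^ 2 := by
      rw [Finset.mul_sum, ← Finset.sum_add_distrib]
      refine Finset.sum_le_sum fun k _ => ?_
      rw [← hξ k, hgrad k]
      nlinarith [mul_le_mul_of_nonneg_right (hP k) (sq_nonneg (v k))]
    have h3 : ∑ k, v k * (Hmat g ξ).mulVec v k ≤ β * sqnorm v := by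
      refine cgd_le_of_sq ?_ (mul_nonneg hβ0 (sqnorm_nonneg v))
      refine (hcs _ _).trans ?_
      have := mul_le_mul_of_nonneg_left (spec_bound _ β (hβ ξ) v) (sqnorm_nonneg v)
      nlinarith
    have h4 := hquad v
    have h5 : β * sqnorm v ≤ l * PM * R0 ^ 2 := by
      have := sqnorm_nonneg v
      gcongr
    have h6 := mul_le_mul_of_nonneg_left hv hPM0.le
    show g (x 0) - g xstar ≤ _
    linarith
  · intro r t c ht hc
    obtain ⟨ξ, hξ⟩ := pder_mvt g hg (x r) (u r)
    have hf := foc g hg hgcv (x r) xstar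
    have hd := hdesc r
    set v := x r - xstar with hv
    have hv1 : x (r + 1) - xstar = v + u r := by rw [hu r, hv]; abel
    simp only [hv1]
    set Y := ∑ k, (-v k) * (Hmat g ξ).mulVec (u r) k with hY
    set S := ∑ k, P k * u r k ^ 2 with hS
    have e1 : ∑ k, P k * (v + u r) k ^ 2 = ∑ k, P k * v k ^ 2 + 2 * (∑ k, P k * v k * u r k) + S := by
      rw [hS, Finset.mul_sum, ← Finset.sum_add_distrib, ← Finset.sum_add_distrib]
      refine Finset.sum_congr rfl fun k _ => ?_
      simp only [Pi.add_apply]; ring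
    have e2 : ∑ k, (x r k - xstar k) * pder g k (x r) = - (∑ k, P k * v k * u r k) + Y := by
      rw [hY, ← Finset.sum_neg_distrib, ← Finset.sum_add_distrib]
      refine Finset.sum_congr rfl fun k _ => ?_
      have := hξ k
      rw [hud r k] at this
      rw [← this, hv]
      simp only [Pi.sub_apply]; ring
    rw [e2] at hf
    rw [e1]
    have hY2 : Y ^ 2 ≤ 2 * (g (x r) - g (x (r + 1))) * (l ^ 2 * (PM * R0 ^ 2)) := by
      have a1 := hcs (fun k => - v k) ((Hmat g ξ).mulVec (u r))
      have a2 : sqnorm (fun k => - v k) = sqnorm v := by simp [sqnorm]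
      rw [a2] at a1
      have a3 := spec_bound _ β (hβ ξ) (u r)
      have a4 := hquad2 (u r)
      have a5 : sqnorm (u r) ≤ 2 * (g (x r) - g (x (r + 1))) / Pm := by
        rw [le_div_iff₀ hmin0]; linarith
      have a6 : β ^ 2 * sqnorm (u r) ≤ β ^ 2 * (2 * (g (x r) - g (x (r + 1))) / Pm) := by gcongr
      calc Y ^ 2 ≤ sqnorm v * sqnorm ((Hmat g ξ).mulVec (u r)) := a1
        _ ≤ R0 ^ 2 * (β ^ 2 * (2 * (g (x r) - g (x (r + 1))) / Pm)) :=
          mul_le_mul (hdist r) (a3.trans a6) (sqnorm_nonneg _) (sq_nonneg _)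
        _ = _ := by rw [hl2]; field_simp
    have hS0 : 0 ≤ S := Finset.sum_nonneg fun k _ => mul_nonneg (hPpos k).le (sq_nonneg _)
    set δ := g (x r) - g (x (r + 1)) with hδ
    have hδ0 : 0 ≤ δ := by linarith
    set B := l ^ 2 * (PM * R0 ^ 2) with hB
    have hB0 : 0 ≤ B := by positivity
    have hq : t ^ 2 * l ^ 2 * (PM * R0 ^ 2) / (2 * c) = t ^ 2 * B / (2 * c) := by rw [hB]; ring
    rw [hq]
    have hyoung : t * Y ≤ c * δ + t ^ 2 * B / (2 * c) := by
      refine cgd_le_of_sq ?_ (by positivity)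
      have b1 : (t * Y) ^ 2 ≤ t ^ 2 * (2 * δ * B) := by
        rw [mul_pow]; gcongr
      have b2 : t ^ 2 * (2 * δ * B) = 4 * (c * δ) * (t ^ 2 * B / (2 * c)) := by field_simp; ring
      nlinarith [sq_nonneg (c * δ - t ^ 2 * B / (2 * c))]
    have hf' := mul_le_mul_of_nonneg_left hf ht.le
    have hd' := mul_le_mul_of_nonneg_left hd ht.le
    have e3 : g (x (r + 1)) = g (x r) - δ := by rw [hδ]; ring
    rw [e3]
    nlinarith
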